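/- Let R be a Hecke symmetry with parameter q such that j_q ≠ 0 for 2 ≤ j ≤ m, let M be an N×N matrix with entries in a unital associative ℂ-algebra 𝒜 satisfying the Reflection Equation R M₁ R M₁ = M₁ R M₁ R, and suppose the R-skew-symmetrizer admits a rank-one factorization A^(m) = |u⟩⟨v| with complex tensors u = ‖u_{i₁…i_m}‖, v = ‖v^{j₁…j_m}‖ and normalization ⟨v|u⟩ = 1. Then A^(m) M_{1̄} ⋯ M_{m̄} = A^(m) M_{1̄} ⋯ M_{m̄} A^(m) = A^(m) · (⟨v| M_{1̄} ⋯ M_{m̄} |u⟩), i.e. the matrix A^(m) M_{1̄} ⋯ M_{m̄} equals the complex matrix A^(m) multiplied on the right by the single algebra element ⟨v| M_{1̄} ⋯ M_{m̄} |u⟩ ∈ 𝒜. -/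

import Mathlib

open Matrix BigOperators

noncomputable section

/-- An `N² × N²` complex matrix, viewed as an operator on `ℂ^N ⊗ ℂ^N`. -/
abbrev RMat (N : ℕ) := Matrix (Fin N × Fin N) (Fin N × Fin N) ℂ

/-- A matrix on the `k`-th tensor power of `ℂ^N`, with entries in `A`. -/
abbrev TMat (N k : ℕ) (A : Type _) := Matrix (Fin k → Fin N) (Fin k → Fin N) A

/-- The `q`-number `j_q = (q^j - q^{-j})/(q - q^{-1})`. -/
def qNum (q : ℂ) (j : ℕ) : ℂ := (q ^ j - q⁻¹ ^ j) / (q - q⁻¹)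

/-- Embedding of an `N²×N²` matrix `R` into the `k`-th tensor power,
acting in the (0-based) tensor factors `i` and `i+1`.  The paper's `R_i`
(1-based) is `embR k R (i-1)`. -/
def embR {N : ℕ} (k : ℕ) (R : RMat N) (i : ℕ) : TMat N k ℂ := fun f g =>
  if h : i + 1 < k then
    if ∀ j : Fin k, j.val ≠ i → j.val ≠ i + 1 → f j = g j then
      R (f ⟨i, Nat.lt_of_succ_lt h⟩, f ⟨i + 1, h⟩) (g ⟨i, Nat.lt_of_succ_lt h⟩, g ⟨i + 1, h⟩)
    else 0
  else (1 : TMat N k ℂ) f g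

/-- `X ⊗ I^{⊗(k-1)}` : the first copy `X_{1̄}` of an `N×N` matrix over `A`. -/
def emb1 {N : ℕ} (k : ℕ) {A : Type _} [Ring A] (X : Matrix (Fin N) (Fin N) A) :
    TMat N k A := fun f g =>
  if h : 0 < k then
    if ∀ j : Fin k, j.val ≠ 0 → f j = g j then X (f ⟨0, h⟩) (g ⟨0, h⟩) else 0
  else (1 : TMat N k A) f g

/-- Lift a complex matrix to a matrix over the `ℂ`-algebra `A`. -/
def liftC {N k : ℕ} (A : Type _) [Ring A] [Algebra ℂ A] (X : TMat N k ℂ) : TMat N k A :=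
  X.map (algebraMap ℂ A)

/-- The copies `X_{1̄}, X_{2̄}, …` of `X` in the `k`-th tensor power:
`copyX k R Rinv X i` is the paper's `X_{\overline{i+1}}`, i.e.
`X_{1̄} = X ⊗ I^{⊗(k-1)}` and `X_{\overline{i+1}} = R_i X_{ī} R_i⁻¹`. -/
def copyX {N : ℕ} (k : ℕ) (R Rinv : RMat N) {A : Type _} [Ring A] [Algebra ℂ A]
    (X : Matrix (Fin N) (Fin N) A) : ℕ → TMat N k A
  | 0 => emb1 k X
  | i + 1 => liftC A (embR k R i) * copyX k R Rinv X i * liftC A (embR k Rinv i)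

/-- The `R`-skew-symmetrizers, on the ambient `k`-th tensor power:
`Asym k R q j` is `A^{(j)}` (acting in the first `j` factors). -/
def Asym {N : ℕ} (k : ℕ) (R : RMat N) (q : ℂ) : ℕ → TMat N k ℂ
  | 0 => 1
  | 1 => 1
  | j + 2 =>
      (qNum q (j + 2))⁻¹ •
        (Asym k R q (j + 1) *
          ((q ^ (j + 1)) • (1 : TMat N k ℂ) - (qNum q (j + 1)) • embR k R j) *
          Asym k R q (j + 1))

/-- The `R`-symmetrizers, on the ambient `k`-th tensor power:
`Ssym k R q j` is `S^{(j)}` (acting in the first `j` factors). -/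
def Ssym {N : ℕ} (k : ℕ) (R : RMat N) (q : ℂ) : ℕ → TMat N k ℂ
  | 0 => 1
  | 1 => 1
  | j + 2 =>
      (qNum q (j + 2))⁻¹ •
        (Ssym k R q (j + 1) *
          ((q⁻¹ ^ (j + 1)) • (1 : TMat N k ℂ) + (qNum q (j + 1)) • embR k R j) *
          Ssym k R q (j + 1))

/-- The braid relation `R₁₂ R₂₃ R₁₂ = R₂₃ R₁₂ R₂₃` on `(ℂ^N)^{⊗3}`. -/
def IsBraiding {N : ℕ} (R : RMat N) : Prop :=
  embR 3 R 0 * embR 3 R 1 * embR 3 R 0 = embR 3 R 1 * embR 3 R 0 * embR 3 R 1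

/-- The Hecke condition `(q·I − R)(q⁻¹·I + R) = 0`. -/
def HeckeCond {N : ℕ} (R : RMat N) (q : ℂ) : Prop :=
  (q • (1 : RMat N) - R) * (q⁻¹ • (1 : RMat N) + R) = 0

/-- The Reflection Equation `R M₁ R M₁ = M₁ R M₁ R` (on `(ℂ^N)^{⊗2}`,
with entries in `A`). -/
def RERel {N : ℕ} (R : RMat N) {A : Type _} [Ring A] [Algebra ℂ A]
    (M : Matrix (Fin N) (Fin N) A) : Prop :=
  liftC A (embR 2 R 0) * emb1 2 M * liftC A (embR 2 R 0) * emb1 2 M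
    = emb1 2 M * liftC A (embR 2 R 0) * emb1 2 M * liftC A (embR 2 R 0)

/-- The relation `R⁻¹ D₁ R⁻¹ D₁ = D₁ R⁻¹ D₁ R⁻¹` on the matrix `D`,
where `Rinv = R⁻¹`. -/
def DDRel {N : ℕ} (Rinv : RMat N) {A : Type _} [Ring A] [Algebra ℂ A]
    (D : Matrix (Fin N) (Fin N) A) : Prop :=
  liftC A (embR 2 Rinv 0) * emb1 2 D * liftC A (embR 2 Rinv 0) * emb1 2 D
    = emb1 2 D * liftC A (embR 2 Rinv 0) * emb1 2 D * liftC A (embR 2 Rinv 0)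

/-- The permutation relations `D₁ R M₁ = R M₁ R⁻¹ D₁ R⁻¹ + I`, where `Rinv = R⁻¹`. -/
def PermRel {N : ℕ} (R Rinv : RMat N) {A : Type _} [Ring A] [Algebra ℂ A]
    (M D : Matrix (Fin N) (Fin N) A) : Prop :=
  emb1 2 D * liftC A (embR 2 R 0) * emb1 2 M
    = liftC A (embR 2 R 0) * emb1 2 M * liftC A (embR 2 Rinv 0) * emb1 2 D *
        liftC A (embR 2 Rinv 0) + 1

/-- `Ψ` is the skew-inverse of `R`:  `Σ_{j,b} R^{ij}_{ab} Ψ^{bc}_{jd} = δ^i_d δ^c_a`. -/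
def SkewInv {N : ℕ} (R Ψ : RMat N) : Prop :=
  ∀ i a c d : Fin N,
    (∑ j : Fin N, ∑ b : Fin N, R (i, j) (a, b) * Ψ (b, c) (j, d))
      = if i = d ∧ c = a then 1 else 0

/-- The matrix `C`, `C^c_d = Σ_i Ψ^{ic}_{id}`. -/
def Cmat {N : ℕ} (Ψ : RMat N) : Matrix (Fin N) (Fin N) ℂ :=
  fun c d => ∑ i : Fin N, Ψ (i, c) (i, d)

/-- The `R`-trace over all `k` tensor factors: `⟨X⟩_{1…k} = Tr(C^{⊗k} X)`. -/
def rTr {N k : ℕ} {A : Type _} [Ring A] [Algebra ℂ A] (C : Matrix (Fin N) (Fin N) ℂ)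
    (X : TMat N k A) : A :=
  ∑ f : Fin k → Fin N, ∑ g : Fin k → Fin N, (∏ j : Fin k, C (f j) (g j)) • X g f

/-- The chain `X_{1̄} X_{2̄} ⋯ X_{n̄}`. -/
def upChain {N : ℕ} (k : ℕ) (R Rinv : RMat N) {A : Type _} [Ring A] [Algebra ℂ A]
    (X : Matrix (Fin N) (Fin N) A) (n : ℕ) : TMat N k A :=
  ((List.range n).map (copyX k R Rinv X)).prod

/-- The reversed chain `X_{n̄} X_{\overline{n-1}} ⋯ X_{1̄}`. -/
def downChain {N : ℕ} (k : ℕ) (R Rinv : RMat N) {A : Type _} [Ring A] [Algebra ℂ A]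
    (X : Matrix (Fin N) (Fin N) A) (n : ℕ) : TMat N k A :=
  ((List.range n).reverse.map (copyX k R Rinv X)).prod

/-- The Capelli chain `L_{1̄}(L_{2̄} + q·1_q I)(L_{3̄} + q²·2_q I) ⋯ (L_{n̄} + q^{n-1}·(n-1)_q I)`
(note `0_q = 0`). -/
def capChainA {N : ℕ} (k : ℕ) (R Rinv : RMat N) (q : ℂ) {A : Type _} [Ring A] [Algebra ℂ A]
    (L : Matrix (Fin N) (Fin N) A) (n : ℕ) : TMat N k A :=
  ((List.range n).map
    (fun i => copyX k R Rinv L i + ((q ^ i) * qNum q i) • (1 : TMat N k A))).prod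

/-- The symmetric Capelli chain
`L_{1̄}(L_{2̄} - q⁻¹·1_q I) ⋯ (L_{n̄} - q^{-(n-1)}·(n-1)_q I)`. -/
def capChainS {N : ℕ} (k : ℕ) (R Rinv : RMat N) (q : ℂ) {A : Type _} [Ring A] [Algebra ℂ A]
    (L : Matrix (Fin N) (Fin N) A) (n : ℕ) : TMat N k A :=
  ((List.range n).map
    (fun i => copyX k R Rinv L i - ((q⁻¹ ^ i) * qNum q i) • (1 : TMat N k A))).prod

/-- The descending chain `R_{a→b} = R_a R_{a-1} ⋯ R_b` (1-based indices;
identity when `b > a`). -/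
def rChainDesc {N : ℕ} (k : ℕ) (R : RMat N) (a b : ℕ) : TMat N k ℂ :=
  ((List.range' b (a + 1 - b)).reverse.map (fun j => embR k R (j - 1))).prod

/-- The ascending chain `R_{b→a} = R_b R_{b+1} ⋯ R_a` (1-based indices;
identity when `b > a`). -/
def rChainAsc {N : ℕ} (k : ℕ) (R : RMat N) (b a : ℕ) : TMat N k ℂ :=
  ((List.range' b (a + 1 - b)).map (fun j => embR k R (j - 1))).prod

/-!
The matrices `R_i` and `M_{1̄}` satisfy the Artin relations of type `B`: the braid relations
together with `R_1 M_{1̄} R_1 M_{1̄} = M_{1̄} R_1 M_{1̄} R_1`. Conjugation by `R_i R_{i+1}` carries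
`R_i` to `R_{i+1}` and `M_{ī}` to `M_{\overline{i+1}}`, while conjugation by `R_{i+1} R_i` carries
`R_{i+1}` to `R_i` and `M_{ī}` to `M_{\overline{i+2}}`. Hence the reflection equation propagates
to every pair `R_i`, `M_{ī}`, and every `R_i` commutes with `M_{1̄} ⋯ M_{m̄}`. So does `A^{(m)}`,
being a polynomial in the `R_i`, and it remains to sandwich the product between two copies
of the rank-one idempotent `|u⟩⟨v|`.
-/

section TypeB

variable {B : Type*} [Monoid B]

theorem commute_of_semiconjBy_units {g : Bˣ} {a b a' b' : B} (hab : Commute a b)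
    (ha : SemiconjBy ↑g a a') (hb : SemiconjBy ↑g b b') : Commute a' b' :=
  g.mul_left_inj.mp <| calc
    a' * b' * g = g * (a * b) := (ha.mul_right hb).eq.symm
    _ = g * (b * a) := by rw [hab.eq]
    _ = b' * a' * g := (hb.mul_right ha).eq

/-- The Artin relations of type `B` on `m` strands, for the generators `r 0, …, r (m - 2)` and
the generator `x` attached to the first strand. The values `r i` with `m ≤ i + 1` are
unconstrained, and the relation `r₀ x r₀ x = x r₀ x r₀` is written as a commutation. -/
structure TypeBRelations (m : ℕ) (r : ℕ → Bˣ) (x : B) : Prop where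
  braid : ∀ i, i + 2 < m → r i * r (i + 1) * r i = r (i + 1) * r i * r (i + 1)
  commute_far : ∀ i j, i + 1 < j → j + 1 < m → Commute (r i) (r j)
  commute_first : ∀ i, 1 ≤ i → i + 1 < m → Commute (r i : B) x
  reflection : 1 < m → Commute x (r 0 * x * r 0)

/-- The copies of `x` along the strands: `x` itself, and then successive conjugates by the
braid generators `r 0`, `r 1`, …. -/
def conjCopy (r : ℕ → Bˣ) (x : B) : ℕ → B
  | 0 => x
  | i + 1 => r i * conjCopy r x i * ↑(r i)⁻¹

theorem semiconjBy_conjCopy (r : ℕ → Bˣ) (x : B) (i : ℕ) :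
    SemiconjBy (r i : B) (conjCopy r x i) (conjCopy r x (i + 1)) :=
  (r i).mk_semiconjBy _

theorem commute_conjCopy_succ {r : ℕ → Bˣ} {x : B} {g : Bˣ} {k : ℕ} (hr : Commute g (r k))
    (hc : Commute (g : B) (conjCopy r x k)) : Commute (g : B) (conjCopy r x (k + 1)) :=
  (hr.units_val.mul_right hc).mul_right hr.units_val.units_inv_right

namespace TypeBRelations

variable {m : ℕ} {r : ℕ → Bˣ} {x : B} {i k : ℕ}

theorem semiconjBy_mul_succ (h : TypeBRelations m r x) (hi : i + 2 < m) :
    SemiconjBy (↑(r i * r (i + 1)) : B) (r i) (r (i + 1)) :=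
  SemiconjBy.units_val ((h.braid i hi).trans (mul_assoc _ _ _))

theorem semiconjBy_succ_mul (h : TypeBRelations m r x) (hi : i + 2 < m) :
    SemiconjBy (↑(r (i + 1) * r i) : B) (r (i + 1)) (r i) :=
  SemiconjBy.units_val ((h.braid i hi).symm.trans (mul_assoc _ _ _))

theorem commute_conjCopy_of_lt (h : TypeBRelations m r x) (hk : k < i) (hi : i + 1 < m) :
    Commute (r i : B) (conjCopy r x k) := by
  induction k with
  | zero => exact h.commute_first i hk hi
  | succ k ih =>
    exact commute_conjCopy_succ (h.commute_far k i hk hi).symm (ih (by omega))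

theorem commute_conjCopy_of_gt (h : TypeBRelations m r x) (hk : i + 1 < k) (hm : k < m) :
    Commute (r i : B) (conjCopy r x k) := by
  induction k, hk using Nat.le_induction with
  | base =>
    have hfix : Commute (r (i + 1) : B) (conjCopy r x i) :=
      h.commute_conjCopy_of_lt i.lt_succ_self hm
    refine commute_of_semiconjBy_units hfix (h.semiconjBy_succ_mul hm) ?_
    rw [Units.val_mul]
    exact (semiconjBy_conjCopy r x (i + 1)).mul_left (semiconjBy_conjCopy r x i)
  | succ k hk ih =>
    exact commute_conjCopy_succ (h.commute_far i k hk hm) (ih (by omega))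

theorem reflection_conjCopy (h : TypeBRelations m r x) (hi : i + 1 < m) :
    Commute (conjCopy r x i) (r i * conjCopy r x i * r i) := by
  induction i with
  | zero => exact h.reflection hi
  | succ i ih =>
    have hfix : Commute (r (i + 1) : B) (conjCopy r x i) :=
      h.commute_conjCopy_of_lt i.lt_succ_self hi
    have hr := h.semiconjBy_mul_succ hi
    have hc : SemiconjBy (↑(r i * r (i + 1)) : B) (conjCopy r x i) (conjCopy r x (i + 1)) := by
      rw [Units.val_mul]
      exact (semiconjBy_conjCopy r x i).mul_left hfix
    exact commute_of_semiconjBy_units (ih (by omega)) hc ((hr.mul_right hc).mul_right hr)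

theorem commute_conjCopy_mul_succ (h : TypeBRelations m r x) (hi : i + 1 < m) :
    Commute (r i : B) (conjCopy r x i * conjCopy r x (i + 1)) := by
  set y := conjCopy r x i
  calc (r i : B) * (y * (r i * y * ↑(r i)⁻¹))
      = r i * y * r i * y * ↑(r i)⁻¹ := by simp only [mul_assoc]
    _ = y * (r i * y * r i) * ↑(r i)⁻¹ := by rw [(h.reflection_conjCopy hi).eq]
    _ = y * (r i * y * ↑(r i)⁻¹) * r i := by
      simp only [mul_assoc, Units.mul_inv, Units.inv_mul]

theorem commute_prod_conjCopy (h : TypeBRelations m r x) (hi : i + 1 < m) :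
    Commute (r i : B) ((List.range m).map (conjCopy r x)).prod := by
  suffices ∀ n, i + 2 ≤ n → n ≤ m →
      Commute (r i : B) ((List.range n).map (conjCopy r x)).prod from this m hi le_rfl
  intro n hn
  induction n, hn using Nat.le_induction with
  | base =>
    intro _
    have hlow : Commute (r i : B) ((List.range i).map (conjCopy r x)).prod := by
      refine Commute.list_prod_right _ _ fun y hy => ?_
      obtain ⟨k, hk, rfl⟩ := List.mem_map.mp hy
      exact h.commute_conjCopy_of_lt (List.mem_range.mp hk) hi
    rw [List.prod_range_succ, List.prod_range_succ, mul_assoc]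
    exact hlow.mul_right (h.commute_conjCopy_mul_succ hi)
  | succ n hn ih =>
    intro hm
    rw [List.prod_range_succ]
    exact (ih (by omega)).mul_right (h.commute_conjCopy_of_gt hn hm)

end TypeBRelations

end TypeB

section TensorFactors

variable {ι ι' κ n A : Type*}

open Classical in
/-- The matrix `X` on the tensor factors indexed by `ι`, placed in the factors `e i` of a tensor
power indexed by `κ` and extended by the identity on all other factors. -/
def onFactors [Zero A] (e : ι ↪ κ) (X : Matrix (ι → n) (ι → n) A) :
    Matrix (κ → n) (κ → n) A :=
  Matrix.of fun f g => if Set.EqOn f g (Set.range e)ᶜ then X (f ∘ e) (g ∘ e) else 0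

open Classical in
theorem onFactors_apply [Zero A] (e : ι ↪ κ) (X : Matrix (ι → n) (ι → n) A) (f g : κ → n) :
    onFactors e X f g = if Set.EqOn f g (Set.range e)ᶜ then X (f ∘ e) (g ∘ e) else 0 :=
  rfl

theorem eq_iff_comp_eq_and_eqOn_compl_range (e : ι → κ) (f g : κ → n) :
    f = g ↔ f ∘ e = g ∘ e ∧ Set.EqOn f g (Set.range e)ᶜ := by
  rw [← Set.eqOn_range, ← Set.eqOn_union, Set.union_compl_self, Set.eqOn_univ]

theorem eqOn_compl_range_comp_iff (d : ι → ι') (e : ι' ↪ κ) (f g : κ → n) :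
    Set.EqOn f g (Set.range (e ∘ d))ᶜ ↔
      Set.EqOn f g (Set.range e)ᶜ ∧ Set.EqOn (f ∘ e) (g ∘ e) (Set.range d)ᶜ := by
  rw [Set.range_comp]
  refine ⟨fun h => ⟨fun j hj => h ?_, fun j hj => h ?_⟩, fun ⟨hout, hin⟩ j hj => ?_⟩
  · exact fun hj' => hj (Set.image_subset_range _ _ hj')
  · rwa [Set.mem_compl_iff, e.injective.mem_set_image]
  · by_cases hje : j ∈ Set.range e
    · obtain ⟨l, rfl⟩ := hje
      exact hin fun hl => hj (Set.mem_image_of_mem e hl)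
    · exact hout hje

theorem eqOn_extend_compl_range (e : ι → κ) (a : ι → n) (f : κ → n) :
    Set.EqOn (Function.extend e a f) f (Set.range e)ᶜ :=
  fun _ hj => Function.extend_apply' _ _ _ hj

theorem onFactors_one [Zero A] [One A] [DecidableEq (ι → n)] [DecidableEq (κ → n)] (e : ι ↪ κ) :
    onFactors e (1 : Matrix (ι → n) (ι → n) A) = 1 := by
  ext f g
  by_cases h : Set.EqOn f g (Set.range e)ᶜ <;>
    simp only [onFactors_apply, Matrix.one_apply, eq_iff_comp_eq_and_eqOn_compl_range e f g, h,
      if_true, if_false, and_true, and_false]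

theorem onFactors_trans [Zero A] (d : ι ↪ ι') (e : ι' ↪ κ) (X : Matrix (ι → n) (ι → n) A) :
    onFactors (d.trans e) X = onFactors e (onFactors d X) := by
  classical
  ext f g
  simp only [onFactors_apply, ← ite_and]
  exact if_congr (eqOn_compl_range_comp_iff d e f g) rfl rfl

theorem onFactors_map {A' F : Type*} [Zero A] [Zero A'] [FunLike F A A'] [ZeroHomClass F A A']
    (φ : F) (e : ι ↪ κ) (X : Matrix (ι → n) (ι → n) A) :
    (onFactors e X).map φ = onFactors e (X.map φ) := by
  ext f g
  simp only [onFactors_apply, Matrix.map_apply, apply_ite φ, map_zero]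

section Mul

variable [Fintype κ] [DecidableEq κ] [Fintype n] [NonUnitalNonAssocSemiring A]

theorem onFactors_mul_apply [Fintype ι] [DecidableEq ι] (e : ι ↪ κ)
    (X : Matrix (ι → n) (ι → n) A) (Z : Matrix (κ → n) (κ → n) A) (f g : κ → n) :
    (onFactors e X * Z) f g = ∑ a, X (f ∘ e) a * Z (Function.extend e a f) g := by
  rw [Matrix.mul_apply]
  refine (Fintype.sum_of_injective (fun a => Function.extend e a f)
    (Function.extend_injective e.injective f) _ _ (fun h hh => ?_) fun a => ?_).symm
  · rw [onFactors_apply, if_neg, zero_mul]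
    refine fun hfh => hh ⟨h ∘ e, ?_⟩
    rw [eq_iff_comp_eq_and_eqOn_compl_range e]
    exact ⟨Function.extend_comp e.injective _ _, (eqOn_extend_compl_range _ _ _).trans hfh⟩
  · rw [onFactors_apply, if_pos (eqOn_extend_compl_range e a f).symm,
      Function.extend_comp e.injective]

open Classical in
theorem onFactors_mul [Fintype ι] [DecidableEq ι] (e : ι ↪ κ) (X Y : Matrix (ι → n) (ι → n) A) :
    onFactors e (X * Y) = onFactors e X * onFactors e Y := by
  ext f g
  have hterm (a : ι → n) : onFactors e Y (Function.extend e a f) g =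
      if Set.EqOn f g (Set.range e)ᶜ then Y a (g ∘ e) else 0 := by
    have hiff : Set.EqOn (Function.extend e a f) g (Set.range e)ᶜ ↔
        Set.EqOn f g (Set.range e)ᶜ :=
      ⟨(eqOn_extend_compl_range e a f).symm.trans, (eqOn_extend_compl_range e a f).trans⟩
    simp only [onFactors_apply, hiff, Function.extend_comp e.injective]
  rw [onFactors_mul_apply, onFactors_apply, Matrix.mul_apply]
  simp only [hterm]
  split_ifs
  · rfl
  · simp only [mul_zero, Finset.sum_const_zero]

open Classical in
theorem onFactors_mul_onFactors_apply_of_disjoint {e : ι ↪ κ} {e' : ι' ↪ κ}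
    (hd : Disjoint (Set.range e) (Set.range e')) (X : Matrix (ι → n) (ι → n) A)
    (Y : Matrix (ι' → n) (ι' → n) A) (f g : κ → n) :
    (onFactors e X * onFactors e' Y) f g =
      if Set.EqOn f g (Set.range e ∪ Set.range e')ᶜ then
        X (f ∘ e) (g ∘ e) * Y (f ∘ e') (g ∘ e') else 0 := by
  have : Fintype ι := Fintype.ofInjective e e.injective
  rw [onFactors_mul_apply, Fintype.sum_eq_single (g ∘ e)]
  · have hcomp : Function.extend e (g ∘ e) f ∘ e' = f ∘ e' := funext fun y =>
      Function.extend_apply' _ _ _ (hd.notMem_of_mem_right ⟨y, rfl⟩)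
    have heq : Set.EqOn (Function.extend e (g ∘ e) f) g (Set.range e')ᶜ ↔
        Set.EqOn f g (Set.range e ∪ Set.range e')ᶜ := by
      refine ⟨fun h j hj => ?_, fun h j hj => ?_⟩
      · rw [← h fun hj' => hj (Or.inr hj'), Function.extend_apply' _ _ _ fun hj' => hj (Or.inl hj')]
      · by_cases hje : j ∈ Set.range e
        · obtain ⟨i, rfl⟩ := hje
          exact e.injective.extend_apply _ _ _
        · rw [Function.extend_apply' _ _ _ hje]
          exact h fun hj' => hj'.elim hje hj
    simp only [onFactors_apply, hcomp, heq, mul_ite, mul_zero]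
  · intro a ha
    rw [onFactors_apply, if_neg, mul_zero]
    refine fun h => ha (funext fun i => ?_)
    rw [← e.injective.extend_apply a f i]
    exact h (hd.notMem_of_mem_left ⟨i, rfl⟩)

theorem commute_onFactors_of_disjoint {e : ι ↪ κ} {e' : ι' ↪ κ}
    (hd : Disjoint (Set.range e) (Set.range e')) {X : Matrix (ι → n) (ι → n) A}
    {Y : Matrix (ι' → n) (ι' → n) A} (hXY : ∀ a b c d, Commute (X a b) (Y c d)) :
    Commute (onFactors e X) (onFactors e' Y) := by
  ext f g
  rw [onFactors_mul_onFactors_apply_of_disjoint hd,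
    onFactors_mul_onFactors_apply_of_disjoint hd.symm, Set.union_comm, (hXY _ _ _ _).eq]

end Mul

end TensorFactors

section Window

/-- The inclusion of the `p` consecutive positions `i, …, i + p - 1` into `Fin k`. -/
def window {k : ℕ} (p i : ℕ) (h : i + p ≤ k) : Fin p ↪ Fin k :=
  (Fin.natAddEmb i).trans (Fin.castLEEmb h)

theorem val_window {k p i : ℕ} (h : i + p ≤ k) (j : Fin p) : (window p i h j : ℕ) = i + j :=
  rfl

theorem mem_range_window {k p i : ℕ} (h : i + p ≤ k) (j : Fin k) :
    j ∈ Set.range (window p i h) ↔ i ≤ j ∧ (j : ℕ) < i + p := by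
  refine ⟨?_, fun hj => ⟨⟨j - i, by omega⟩, Fin.ext ?_⟩⟩
  · rintro ⟨l, rfl⟩
    rw [val_window]
    omega
  · simp only [val_window]
    omega

theorem disjoint_range_window {k p i p' i' : ℕ} (h : i + p ≤ k) (h' : i' + p' ≤ k)
    (hd : i + p ≤ i') : Disjoint (Set.range (window p i h)) (Set.range (window p' i' h')) := by
  rw [Set.disjoint_left]
  intro j
  rw [mem_range_window, mem_range_window]
  omega

theorem window_trans_window {k l p i j : ℕ} (h : i + p ≤ l) (h' : j + l ≤ k) :
    (window p i h).trans (window l j h') = window p (j + i) (by omega) :=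
  Function.Embedding.ext fun _ => Fin.ext (Nat.add_assoc _ _ _).symm

end Window

section Embeddings

variable {N k : ℕ}

theorem embR_eq_onFactors (R : RMat N) {i : ℕ} (hi : i + 2 ≤ k) :
    embR k R i = onFactors (window 2 i hi)
      (R.submatrix (finTwoArrowEquiv (Fin N)) (finTwoArrowEquiv (Fin N))) := by
  classical
  ext f g
  have heq : (∀ j : Fin k, j.val ≠ i → j.val ≠ i + 1 → f j = g j) ↔
      Set.EqOn f g (Set.range (window 2 i hi))ᶜ := by
    refine forall_congr' fun j => ?_
    rw [Set.mem_compl_iff, mem_range_window, ← and_imp]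
    exact imp_congr_left (by omega)
  simp only [embR, dif_pos (show i + 1 < k from hi), heq, onFactors_apply]
  rfl

theorem emb1_eq_onFactors {A : Type*} [Ring A] (X : Matrix (Fin N) (Fin N) A) (hk : 0 + 1 ≤ k) :
    emb1 k X = onFactors (window 1 0 hk)
      (X.submatrix (Equiv.funUnique (Fin 1) (Fin N)) (Equiv.funUnique (Fin 1) (Fin N))) := by
  classical
  ext f g
  have heq : (∀ j : Fin k, j.val ≠ 0 → f j = g j) ↔
      Set.EqOn f g (Set.range (window 1 0 hk))ᶜ := by
    refine forall_congr' fun j => ?_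
    rw [Set.mem_compl_iff, mem_range_window]
    exact imp_congr_left (by omega)
  simp only [emb1, dif_pos (show 0 < k by omega), heq, onFactors_apply]
  rfl

theorem embR_add_eq_onFactors {p i j : ℕ} (R : RMat N) (hi : i + p ≤ k) (hj : j + 2 ≤ p) :
    embR k R (i + j) = onFactors (window p i hi) (embR p R j) := by
  rw [embR_eq_onFactors R hj, ← onFactors_trans, window_trans_window hj hi, embR_eq_onFactors]

theorem emb1_eq_onFactors_emb1 {A : Type*} [Ring A] {p : ℕ} (X : Matrix (Fin N) (Fin N) A)
    (hp : 0 + 1 ≤ p) (hk : 0 + p ≤ k) :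
    emb1 k X = onFactors (window p 0 hk) (emb1 p X) := by
  rw [emb1_eq_onFactors X hp, ← onFactors_trans, window_trans_window hp hk, emb1_eq_onFactors]

theorem embR_of_le (R : RMat N) {i : ℕ} (hi : k ≤ i + 1) : embR k R i = 1 := by
  ext f g
  exact dif_neg hi.not_gt

theorem embR_one (i : ℕ) : embR k (1 : RMat N) i = 1 := by
  rcases lt_or_ge (i + 1) k with hi | hi
  · rw [embR_eq_onFactors _ hi, Matrix.submatrix_one_equiv, onFactors_one]
  · exact embR_of_le _ hi

theorem embR_mul (R S : RMat N) (i : ℕ) : embR k (R * S) i = embR k R i * embR k S i := by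
  rcases lt_or_ge (i + 1) k with hi | hi
  · simp only [embR_eq_onFactors _ hi, ← onFactors_mul, Matrix.submatrix_mul_equiv]
  · simp only [embR_of_le _ hi, mul_one]

theorem embR_braid {R : RMat N} (hR : IsBraiding R) {i : ℕ} (hi : i + 2 < k) :
    embR k R i * embR k R (i + 1) * embR k R i
      = embR k R (i + 1) * embR k R i * embR k R (i + 1) := by
  have h₀ : embR k R i = onFactors (window 3 i hi) (embR 3 R 0) :=
    embR_add_eq_onFactors (j := 0) R hi (by omega)
  have h₁ : embR k R (i + 1) = onFactors (window 3 i hi) (embR 3 R 1) :=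
    embR_add_eq_onFactors R hi le_rfl
  rw [h₀, h₁]
  simp only [← onFactors_mul]
  rw [hR]

theorem commute_embR (R : RMat N) {i j : ℕ} (hij : i + 1 < j) (hj : j + 1 < k) :
    Commute (embR k R i) (embR k R j) := by
  rw [embR_eq_onFactors R (show i + 2 ≤ k by omega), embR_eq_onFactors R hj]
  exact commute_onFactors_of_disjoint (disjoint_range_window _ _ hij) fun _ _ _ _ =>
    Commute.all _ _

end Embeddings

section Lift

variable {N k : ℕ} {A : Type*} [Ring A] [Algebra ℂ A]

theorem liftC_eq_mapMatrix (X : TMat N k ℂ) :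
    liftC A X = (Algebra.ofId ℂ A).mapMatrix X :=
  rfl

theorem liftC_onFactors {p : ℕ} (e : Fin p ↪ Fin k) (X : TMat N p ℂ) :
    liftC A (onFactors e X) = onFactors e (liftC A X) :=
  onFactors_map (algebraMap ℂ A) e X

theorem isIdempotentElem_liftC {X : TMat N k ℂ} (hX : IsIdempotentElem X) :
    IsIdempotentElem (liftC A X) :=
  hX.map (Algebra.ofId ℂ A).mapMatrix

theorem commute_liftC_embR_emb1 (R : RMat N) (M : Matrix (Fin N) (Fin N) A) {i : ℕ}
    (h0 : 1 ≤ i) (hi : i + 1 < k) : Commute (liftC A (embR k R i)) (emb1 k M) := by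
  rw [embR_eq_onFactors R hi, liftC_onFactors, emb1_eq_onFactors M (show 0 + 1 ≤ k by omega)]
  exact commute_onFactors_of_disjoint (disjoint_range_window _ _ h0).symm fun _ _ _ _ =>
    Algebra.commutes _ _

theorem commute_emb1_of_RERel {R : RMat N} {M : Matrix (Fin N) (Fin N) A} (hRE : RERel R M)
    (hk : 1 < k) :
    Commute (emb1 k M) (liftC A (embR k R 0) * emb1 k M * liftC A (embR k R 0)) := by
  have hk₂ : 0 + 2 ≤ k := by omega
  have hR : liftC A (embR k R 0) = onFactors (window 2 0 hk₂) (liftC A (embR 2 R 0)) := by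
    rw [← liftC_onFactors, ← embR_add_eq_onFactors R hk₂ le_rfl]
  rw [hR, emb1_eq_onFactors_emb1 M (by omega) hk₂]
  simp only [Commute, SemiconjBy, ← onFactors_mul]
  rw [hRE]
  simp only [mul_assoc]

/-- The image of an invertible `R` in the units of the matrices over `A` on the `k`-th tensor
power, acting in the factors `i` and `i + 1`. -/
def liftEmbRUnit (k : ℕ) (A : Type*) [Ring A] [Algebra ℂ A] (R : (RMat N)ˣ) (i : ℕ) :
    (TMat N k A)ˣ :=
  Units.map (Algebra.ofId ℂ A).mapMatrix.toRingHom.toMonoidHom <|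
    Units.map ⟨⟨fun S => embR k S i, embR_one i⟩, fun S T => embR_mul S T i⟩ R

theorem val_liftEmbRUnit (R : (RMat N)ˣ) (i : ℕ) :
    (liftEmbRUnit k A R i : TMat N k A) = liftC A (embR k R i) :=
  rfl

theorem conjCopy_liftEmbRUnit (R : (RMat N)ˣ) (M : Matrix (Fin N) (Fin N) A) :
    conjCopy (liftEmbRUnit k A R) (emb1 k M) = copyX k R ↑R⁻¹ M := by
  funext i
  induction i with
  | zero => rfl
  | succ i ih => rw [conjCopy, copyX, ih]; rfl

theorem typeBRelations_liftEmbRUnit {R : (RMat N)ˣ} (hbr : IsBraiding (R : RMat N))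
    {M : Matrix (Fin N) (Fin N) A} (hRE : RERel (R : RMat N) M) :
    TypeBRelations k (liftEmbRUnit k A R) (emb1 k M) where
  braid i hi := Units.ext <| by
    simp only [Units.val_mul, val_liftEmbRUnit, liftC_eq_mapMatrix, ← map_mul, embR_braid hbr hi]
  commute_far i j hij hj := Units.ext <|
    ((commute_embR (R : RMat N) hij hj).map (Algebra.ofId ℂ A).mapMatrix).eq
  commute_first _ h0 hi := commute_liftC_embR_emb1 _ M h0 hi
  reflection hk := commute_emb1_of_RERel hRE hk

theorem commute_liftC_embR_upChain {R : (RMat N)ˣ} (hbr : IsBraiding (R : RMat N))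
    {M : Matrix (Fin N) (Fin N) A} (hRE : RERel (R : RMat N) M) {i : ℕ} (hi : i + 1 < k) :
    Commute (liftC A (embR k R i)) (upChain k R ↑R⁻¹ M k) := by
  have h := (typeBRelations_liftEmbRUnit hbr hRE).commute_prod_conjCopy hi
  rwa [conjCopy_liftEmbRUnit] at h

theorem commute_liftC_Asym {R : RMat N} (q : ℂ) {X : TMat N k A} {n : ℕ}
    (hX : ∀ i, i + 1 < n → Commute (liftC A (embR k R i)) X) :
    Commute (liftC A (Asym k R q n)) X := by
  induction n using Nat.twoStepInduction with
  | zero => simp only [Asym, liftC_eq_mapMatrix, map_one, Commute.one_left]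
  | one => simp only [Asym, liftC_eq_mapMatrix, map_one, Commute.one_left]
  | more n _ ih =>
    have hA := ih fun i hi => hX i (by omega)
    have hR := hX n (by omega)
    simp only [liftC_eq_mapMatrix] at hA hR ⊢
    simp only [Asym, map_smul, map_mul, map_sub, map_one]
    exact ((hA.mul_left (((Commute.one_left X).smul_left _).sub_left (hR.smul_left _))).mul_left
      hA).smul_left _

end Lift

section RankOne

variable {ι : Type*} [Fintype ι]

theorem isIdempotentElem_vecMulVec {K : Type*} [Semiring K] {u v : ι → K} (h : v ⬝ᵥ u = 1) :
    IsIdempotentElem (vecMulVec u v) := by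
  rw [IsIdempotentElem, vecMulVec_mul_vecMulVec, h, one_smul]

theorem algebraMap_vecMul_dotProduct {K A : Type*} [CommSemiring K] [Semiring A] [Algebra K A]
    (u v : ι → K) (X : Matrix ι ι A) :
    (algebraMap K A ∘ v) ᵥ* X ⬝ᵥ (algebraMap K A ∘ u) = ∑ i, ∑ j, (v i * u j) • X i j := by
  simp only [vecMul, dotProduct, Function.comp_apply, Finset.sum_mul]
  rw [Finset.sum_comm]
  refine Finset.sum_congr rfl fun i _ => Finset.sum_congr rfl fun j _ => ?_
  rw [← Algebra.commutes, mul_comm (v i), mul_smul, Algebra.smul_def, Algebra.smul_def]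

theorem map_vecMulVec_mul_mul_map_vecMulVec {K A : Type*} [DecidableEq ι] [CommSemiring K]
    [Semiring A] [Algebra K A] (u v : ι → K) (X : Matrix ι ι A) :
    (vecMulVec u v).map (algebraMap K A) * X * (vecMulVec u v).map (algebraMap K A) =
      (vecMulVec u v).map (algebraMap K A) *
        ((∑ i, ∑ j, (v i * u j) • X i j) • (1 : Matrix ι ι A)) := by
  have hmap : (vecMulVec u v).map (algebraMap K A) =
      vecMulVec (algebraMap K A ∘ u) (algebraMap K A ∘ v) :=
    Matrix.ext fun i j => map_mul (algebraMap K A) (u i) (v j)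
  rw [hmap, vecMulVec_mul, vecMulVec_mul_vecMulVec, vecMulVec_mul, algebraMap_vecMul_dotProduct]
  congr 1
  ext j
  rw [smul_one_eq_diagonal, vecMul_diagonal]
  exact (Algebra.commutes (v j) _).symm

end RankOne

theorem statement15_general {N m : ℕ} (R : (RMat N)ˣ) (q : ℂ) (hbr : IsBraiding (R : RMat N))
    {A : Type _} [Ring A] [Algebra ℂ A]
    (M : Matrix (Fin N) (Fin N) A) (hRE : RERel (R : RMat N) M)
    (u v : (Fin m → Fin N) → ℂ)
    (hA : ∀ f g : Fin m → Fin N, Asym m R q m f g = u f * v g)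
    (hnorm : (∑ f : Fin m → Fin N, v f * u f) = 1) :
    liftC A (Asym m R q m) * upChain m R ↑R⁻¹ M m
        = liftC A (Asym m R q m) * upChain m R ↑R⁻¹ M m * liftC A (Asym m R q m) ∧
    liftC A (Asym m R q m) * upChain m R ↑R⁻¹ M m
        = liftC A (Asym m R q m) *
            ((∑ f : Fin m → Fin N, ∑ g : Fin m → Fin N,
                (v f * u g) • upChain m R ↑R⁻¹ M m f g) • (1 : TMat N m A)) := by
  have hcomm : Commute (liftC A (Asym m R q m)) (upChain m R ↑R⁻¹ M m) :=
    commute_liftC_Asym q fun _ hi => commute_liftC_embR_upChain hbr hRE hi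
  have hrank : Asym m R q m = vecMulVec u v := Matrix.ext hA
  have hidem : IsIdempotentElem (liftC A (Asym m (R : RMat N) q m)) :=
    isIdempotentElem_liftC (hrank ▸ isIdempotentElem_vecMulVec hnorm)
  have hsandwich : liftC A (Asym m R q m) * upChain m R ↑R⁻¹ M m
      = liftC A (Asym m R q m) * upChain m R ↑R⁻¹ M m * liftC A (Asym m R q m) := by
    rw [mul_assoc, ← hcomm.eq, ← mul_assoc, hidem.eq]
  refine ⟨hsandwich, hsandwich.trans ?_⟩
  rw [hrank]
  exact map_vecMulVec_mul_mul_map_vecMulVec u v _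

/-- if `A^(m) = |u⟩⟨v|` with `⟨v|u⟩ = 1`, then
`A^(m) M_{1̄}⋯M_{m̄} = A^(m) M_{1̄}⋯M_{m̄} A^(m) = A^(m) · ⟨v|M_{1̄}⋯M_{m̄}|u⟩`,
the last factor being a single element of `𝒜`. -/
theorem statement15 {N m : ℕ} (R Rinv : RMat N) (q : ℂ)
    (hq0 : q ≠ 0) (hq1 : q ≠ 1) (hqm1 : q ≠ -1)
    (hinv : R * Rinv = 1) (hinv' : Rinv * R = 1)
    (hbr : IsBraiding R) (hH : HeckeCond R q)
    (hqm : ∀ j : ℕ, 2 ≤ j → j ≤ m → qNum q j ≠ 0)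
    {A : Type _} [Ring A] [Algebra ℂ A]
    (M : Matrix (Fin N) (Fin N) A) (hRE : RERel R M)
    (u v : (Fin m → Fin N) → ℂ)
    (hA : ∀ f g : Fin m → Fin N, Asym m R q m f g = u f * v g)
    (hnorm : (∑ f : Fin m → Fin N, v f * u f) = 1) :
    liftC A (Asym m R q m) * upChain m R Rinv M m
        = liftC A (Asym m R q m) * upChain m R Rinv M m * liftC A (Asym m R q m) ∧
    liftC A (Asym m R q m) * upChain m R Rinv M m
        = liftC A (Asym m R q m) *
            ((∑ f : Fin m → Fin N, ∑ g : Fin m → Fin N,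
                (v f * u g) • upChain m R Rinv M m f g) • (1 : TMat N m A)) :=
  statement15_general ⟨R, Rinv, hinv, hinv'⟩ q hbr M hRE u v hA hnorm
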